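/- Let S be a commutative semiring with elements u, v ∈ S such that u·v = 0, u² ≠ 0, and v² ≠ 0. Then there is a trim bideterministic weighted automaton A over S and a two-letter alphabet such that no minimal weighted automaton over S whose behaviour equals ‖A‖ is bideterministic. -/

import Mathlib

/-- A weighted automaton over a semiring `S` and alphabet `α`:
a finite type of states `Q`, a transition weighting `σ`, an initial
weighting `ι` and a terminal weighting `τ`. -/
structure WeightedAutomaton (S : Type) [Semiring S] (α : Type) : Type 1 where
  Q : Type
  [fintypeQ : Fintype Q]
  σ : Q → α → Q → S
  ι : Q → S
  τ : Q → S

namespace WeightedAutomaton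

attribute [instance] fintypeQ

variable {S : Type} [Semiring S] {α : Type}

/-- The "future" of a state on a word: the sum, over all runs from this state
upon the word, of the product of the transition weights times the terminal
weight of the last state.  (Sequences of states using a zero-weight transition
contribute zero, so this is exactly the sum over runs.) -/
def future (A : WeightedAutomaton S α) : List α → A.Q → S
  | [], q => A.τ q
  | c :: w, q => ∑ p : A.Q, A.σ q c p * A.future w p

/-- The behaviour of a weighted automaton: the series sending each word `w`
to the sum of the monomial weights `ι(q₀)·σ(q₀,c₁,q₁)⋯σ(q_{n−1},cₙ,qₙ)·τ(qₙ)`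
of all runs of the automaton upon `w`. -/
def behaviour (A : WeightedAutomaton S α) (w : List α) : S :=
  ∑ q : A.Q, A.ι q * A.future w q

/-- A weighted automaton is bideterministic if at most one state has nonzero
initial weight, at most one state has nonzero terminal weight, and for every
letter each state has at most one outgoing and at most one incoming transition
with nonzero weight upon that letter. -/
def Bideterministic (A : WeightedAutomaton S α) : Prop :=
  (∀ p q, A.ι p ≠ 0 → A.ι q ≠ 0 → p = q) ∧
  (∀ p q, A.τ p ≠ 0 → A.τ q ≠ 0 → p = q) ∧
  (∀ p c q q', A.σ p c q ≠ 0 → A.σ p c q' ≠ 0 → q = q') ∧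
  (∀ p p' c q, A.σ p c q ≠ 0 → A.σ p' c q ≠ 0 → p = p')

/-- `A.IsPath q l` : starting in state `q`, the list `l` of (letter, next state)
pairs follows transitions all of which have nonzero weight, i.e. it is a run. -/
def IsPath (A : WeightedAutomaton S α) : A.Q → List (α × A.Q) → Prop
  | _, [] => True
  | q, (c, q') :: l => A.σ q c q' ≠ 0 ∧ A.IsPath q' l

/-- The last state of a path. -/
def pathEnd (A : WeightedAutomaton S α) : A.Q → List (α × A.Q) → A.Q
  | q, [] => q
  | _, (_, q') :: l => A.pathEnd q' l

/-- The product of the transition weights along a path. -/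
def pathWeight (A : WeightedAutomaton S α) : A.Q → List (α × A.Q) → S
  | _, [] => 1
  | q, (c, q') :: l => A.σ q c q' * A.pathWeight q' l

/-- A state is accessible if some run from a state with nonzero initial weight
ends in it. -/
def Accessible (A : WeightedAutomaton S α) (q : A.Q) : Prop :=
  ∃ p l, A.ι p ≠ 0 ∧ A.IsPath p l ∧ A.pathEnd p l = q

/-- A state is coaccessible if some run from it ends in a state with nonzero
terminal weight. -/
def Coaccessible (A : WeightedAutomaton S α) (q : A.Q) : Prop :=
  ∃ l, A.IsPath q l ∧ A.τ (A.pathEnd q l) ≠ 0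

/-- A weighted automaton is trim if all its states are accessible and
coaccessible. -/
def Trim (A : WeightedAutomaton S α) : Prop :=
  ∀ q, A.Accessible q ∧ A.Coaccessible q

/-- A weighted automaton is semantically trim if every state lies on some run
whose monomial weight is nonzero. -/
def SemanticallyTrim (A : WeightedAutomaton S α) : Prop :=
  ∀ q, ∃ p l, A.IsPath p l ∧ (q = p ∨ q ∈ l.map Prod.snd) ∧
    A.ι p * A.pathWeight p l * A.τ (A.pathEnd p l) ≠ 0

/-- The number of states of a weighted automaton. -/
def states (A : WeightedAutomaton S α) : ℕ := Fintype.card A.Q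

/-- A weighted automaton is minimal if every weighted automaton over the same
semiring and alphabet with the same behaviour has at least as many states. -/
def Minimal (A : WeightedAutomaton S α) : Prop :=
  ∀ B : WeightedAutomaton S α, B.behaviour = A.behaviour → A.states ≤ B.states

end WeightedAutomaton

/-!
The witness has two base states swapped by the letter `false`, each with its own detour
`base → detour → base` upon `true`, of weights `u, u` and `v, v`. Since `u * v = 0`, the two detour
states can be merged: a run entering through one detour and leaving through the other has weight
zero. This gives an equivalent automaton with three states.

An equivalent deterministic automaton needs four states. If two words `x`, `y` lead to the same
state of a deterministic automaton over a commutative semiring, then the rows of `x` and `y` in the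
Hankel matrix of its behaviour are multiples of a common row, hence satisfy
`‖A‖(xz) * ‖A‖(yt) = ‖A‖(xt) * ‖A‖(yz)` for all words `z`, `t`. This separates the words `ε`,
`false`, `true`. It fails to separate `true` from `false true`, but if these two lead to the same
state, then `true true` leads to a fourth one.
-/

namespace WeightedAutomaton

open Function (support)

section Semiring

variable {S : Type} [Semiring S] {α : Type} {A : WeightedAutomaton S α}

/-- The dual of `future`: the sum, over all runs upon a word that end in a given state, of the
initial weight times the product of the transition weights. -/
def past (A : WeightedAutomaton S α) (w : List α) : A.Q → S :=
  w.foldl (fun f c q => ∑ p, f p * A.σ p c q) A.ι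

/-- A weighted automaton is deterministic if at most one state has nonzero initial weight and for
every letter each state has at most one outgoing transition with nonzero weight. -/
def Deterministic (A : WeightedAutomaton S α) : Prop :=
  (support A.ι).Subsingleton ∧ ∀ p c, (support (A.σ p c)).Subsingleton

/-- Two words share a state if both have nonzero past weight there; in a deterministic automaton
this says that both words lead to the same state. -/
def SharesState (A : WeightedAutomaton S α) (x y : List α) : Prop :=
  ∃ q, A.past x q ≠ 0 ∧ A.past y q ≠ 0

theorem past_append_singleton (A : WeightedAutomaton S α) (w : List α) (c : α) (q : A.Q) :
    A.past (w ++ [c]) q = ∑ p, A.past w p * A.σ p c q := by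
  simp only [past, List.foldl_append, List.foldl_cons, List.foldl_nil]

theorem behaviour_append (A : WeightedAutomaton S α) (x z : List α) :
    A.behaviour (x ++ z) = ∑ q, A.past x q * A.future z q := by
  induction x using List.reverseRecOn generalizing z with
  | nil => rfl
  | append_singleton x c ih =>
    calc A.behaviour (x ++ [c] ++ z)
        = ∑ p, A.past x p * ∑ q, A.σ p c q * A.future z q := by
          rw [List.append_assoc, ih]
          rfl
      _ = ∑ q, (∑ p, A.past x p * A.σ p c q) * A.future z q := by
          simp only [Finset.mul_sum, Finset.sum_mul, mul_assoc]
          exact Finset.sum_comm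
      _ = ∑ q, A.past (x ++ [c]) q * A.future z q := by
          simp only [past_append_singleton]

theorem exists_past_ne_zero {x z : List α} (h : A.behaviour (x ++ z) ≠ 0) :
    ∃ q, A.past x q ≠ 0 := by
  rw [behaviour_append] at h
  obtain ⟨q, -, hq⟩ := Finset.exists_ne_zero_of_sum_ne_zero h
  exact ⟨q, left_ne_zero_of_mul hq⟩

theorem exists_past_ne_zero_of_past_append_singleton_ne_zero {x : List α} {c : α} {q : A.Q}
    (h : A.past (x ++ [c]) q ≠ 0) : ∃ p, A.past x p ≠ 0 ∧ A.σ p c q ≠ 0 := by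
  rw [past_append_singleton] at h
  obtain ⟨p, -, hp⟩ := Finset.exists_ne_zero_of_sum_ne_zero h
  exact ⟨p, left_ne_zero_of_mul hp, right_ne_zero_of_mul hp⟩

theorem length_le_states {ws : List (List α)} (hpast : ∀ w ∈ ws, ∃ q, A.past w q ≠ 0)
    (hws : ws.Pairwise fun x y => ¬ A.SharesState x y) : ws.length ≤ A.states := by
  have hnodup : (ws.pmap (fun w (hw : ∃ q, A.past w q ≠ 0) => hw.choose) hpast).Nodup :=
    hws.pmap hpast fun _ hx _ hy hxy heq =>
      hxy ⟨hx.choose, hx.choose_spec, heq ▸ hy.choose_spec⟩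
  simpa only [states, List.length_pmap] using hnodup.length_le_card

namespace Deterministic

theorem support_past_subsingleton (hA : A.Deterministic) (w : List α) :
    (support (A.past w)).Subsingleton := by
  induction w using List.reverseRecOn with
  | nil => exact hA.1
  | append_singleton w c ih =>
    intro q hq q' hq'
    obtain ⟨p, hp, hpq⟩ := exists_past_ne_zero_of_past_append_singleton_ne_zero hq
    obtain ⟨p', hp', hpq'⟩ := exists_past_ne_zero_of_past_append_singleton_ne_zero hq'
    obtain rfl := ih hp hp'
    exact hA.2 p c hpq hpq'

theorem past_eq_zero (hA : A.Deterministic) {w : List α} {p q : A.Q} (hq : A.past w q ≠ 0)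
    (hpq : p ≠ q) : A.past w p = 0 :=
  of_not_not fun hp => hpq (hA.support_past_subsingleton w hp hq)

theorem behaviour_append_eq (hA : A.Deterministic) {x : List α} {q : A.Q} (hq : A.past x q ≠ 0)
    (z : List α) : A.behaviour (x ++ z) = A.past x q * A.future z q := by
  rw [behaviour_append]
  exact Fintype.sum_eq_single q fun p hp => by rw [hA.past_eq_zero hq hp, zero_mul]

theorem past_dvd_past_append (hA : A.Deterministic) {x : List α} {q : A.Q}
    (hq : A.past x q ≠ 0) (z : List α) (r : A.Q) : A.past x q ∣ A.past (x ++ z) r := by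
  induction z using List.reverseRecOn generalizing r with
  | nil =>
    rw [List.append_nil]
    obtain rfl | hr := eq_or_ne r q
    · exact dvd_rfl
    · rw [hA.past_eq_zero hq hr]
      exact dvd_zero _
  | append_singleton z c ih =>
    rw [← List.append_assoc, past_append_singleton]
    exact Finset.dvd_sum fun p _ => (ih p).mul_right _

theorem sharesState_trans (hA : A.Deterministic) {x y z : List α} (hxy : A.SharesState x y)
    (hyz : A.SharesState y z) : A.SharesState x z := by
  obtain ⟨p, hxp, hyp⟩ := hxy
  obtain ⟨q, hyq, hzq⟩ := hyz
  obtain rfl := hA.support_past_subsingleton y hyp hyq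
  exact ⟨p, hxp, hzq⟩

theorem sharesState_append_singleton (hA : A.Deterministic) {x y : List α} {c : α}
    (hxy : A.SharesState x y) (hx : ∃ q, A.past (x ++ [c]) q ≠ 0)
    (hy : ∃ q, A.past (y ++ [c]) q ≠ 0) : A.SharesState (x ++ [c]) (y ++ [c]) := by
  obtain ⟨p, hxp, hyp⟩ := hxy
  obtain ⟨q, hxq⟩ := hx
  obtain ⟨q', hyq'⟩ := hy
  obtain ⟨r, hxr, hrq⟩ := exists_past_ne_zero_of_past_append_singleton_ne_zero hxq
  obtain ⟨r', hyr', hrq'⟩ := exists_past_ne_zero_of_past_append_singleton_ne_zero hyq'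
  obtain rfl := hA.support_past_subsingleton x hxp hxr
  obtain rfl := hA.support_past_subsingleton y hyp hyr'
  obtain rfl := hA.2 p c hrq hrq'
  exact ⟨q, hxq, hyq'⟩

end Deterministic

theorem Bideterministic.deterministic (hA : A.Bideterministic) : A.Deterministic :=
  ⟨fun p hp q hq => hA.1 p q hp hq, fun p c q hq q' hq' => hA.2.2.1 p c q q' hq hq'⟩

end Semiring

section CommSemiring

variable {S : Type} [CommSemiring S] {α : Type} {A : WeightedAutomaton S α}

theorem Deterministic.behaviour_dvd_of_sharesState (hA : A.Deterministic) {x z : List α}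
    (h : A.SharesState (x ++ z) x) (w : List α) :
    A.behaviour (x ++ w) ∣ A.behaviour (x ++ z ++ w) := by
  obtain ⟨q, hxz, hx⟩ := h
  rw [hA.behaviour_append_eq hx, hA.behaviour_append_eq hxz]
  exact mul_dvd_mul_right (hA.past_dvd_past_append hx z q) _

theorem Deterministic.not_sharesState (hA : A.Deterministic) {x y : List α} (z z' : List α)
    (h : A.behaviour (x ++ z) * A.behaviour (y ++ z') ≠
      A.behaviour (x ++ z') * A.behaviour (y ++ z)) : ¬ A.SharesState x y := by
  rintro ⟨q, hx, hy⟩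
  apply h
  simp only [hA.behaviour_append_eq hx, hA.behaviour_append_eq hy]
  ring

end CommSemiring

section Detour

variable {S : Type} [Semiring S]

/-- The four-state witness: `false` swaps the base states `0` and `1`, and `true` makes the detours
`0 → 2 → 0` and `1 → 3 → 1`, all of whose transitions have weight `u` and `v`, respectively. An
`abbrev`, so that its states unfold to `Fin 4`. -/
abbrev detour (u v : S) : WeightedAutomaton S Bool where
  Q := Fin 4
  σ p c q := match c with
    | false => !![0, 1, 0, 0; 1, 0, 0, 0; 0, 0, 0, 0; 0, 0, 0, 0] p q
    | true => !![0, 0, u, 0; 0, 0, 0, v; u, 0, 0, 0; 0, v, 0, 0] p q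
  ι := ![1, 0, 0, 0]
  τ := ![1, 0, 0, 0]

/-- The automaton obtained from `detour u v` by merging the states `2` and `3`. -/
abbrev mergedDetour (u v : S) : WeightedAutomaton S Bool where
  Q := Fin 3
  σ p c q := match c with
    | false => !![0, 1, 0; 1, 0, 0; 0, 0, 0] p q
    | true => !![0, 0, u; 0, 0, v; u, v, 0] p q
  ι := ![1, 0, 0]
  τ := ![1, 0, 0]

variable {u v : S}

@[simp]
theorem behaviour_detour (u v : S) (w : List Bool) :
    (detour u v).behaviour w = (detour u v).future w 0 := by
  simp [behaviour, Fin.sum_univ_four]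

@[simp]
theorem future_detour_nil (u v : S) : (detour u v).future [] = ![1, 0, 0, 0] := rfl

@[simp]
theorem future_detour_false (u v : S) (w : List Bool) :
    (detour u v).future (false :: w) =
      ![(detour u v).future w 1, (detour u v).future w 0, 0, 0] := by
  funext q
  fin_cases q <;> simp [future, Fin.sum_univ_four]

@[simp]
theorem future_detour_true (u v : S) (w : List Bool) :
    (detour u v).future (true :: w) =
      ![u * (detour u v).future w 2, v * (detour u v).future w 3,
        u * (detour u v).future w 0, v * (detour u v).future w 1] := by
  funext q
  fin_cases q <;> simp [future, Fin.sum_univ_four]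

theorem trim_detour (hu : u ≠ 0) (hv : v ≠ 0) : (detour u v).Trim := by
  have : Nontrivial S := ⟨u, 0, hu⟩
  refine Fin.forall_fin_succ.mpr ⟨⟨⟨0, [], ?_⟩, [], ?_⟩, Fin.forall_fin_succ.mpr
    ⟨⟨⟨0, [(false, 1)], ?_⟩, [(false, 0)], ?_⟩, Fin.forall_fin_two.mpr
      ⟨⟨⟨0, [(true, 2)], ?_⟩, [(true, 0)], ?_⟩,
        ⟨⟨0, [(false, 1), (true, 3)], ?_⟩, [(true, 1), (false, 0)], ?_⟩⟩⟩⟩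
  all_goals simp [IsPath, pathEnd, hu, hv]

theorem bideterministic_detour (u v : S) : (detour u v).Bideterministic := by
  simp [Bideterministic, Fin.forall_fin_succ]

theorem mul_future_detour_two (hvu : v * u = 0) (w : List Bool) :
    v * (detour u v).future w 2 = 0 := by
  rcases w with _ | ⟨_ | _, w⟩ <;> simp [← mul_assoc, hvu]

theorem mul_future_detour_three (huv : u * v = 0) (w : List Bool) :
    u * (detour u v).future w 3 = 0 := by
  rcases w with _ | ⟨_ | _, w⟩ <;> simp [← mul_assoc, huv]

theorem future_mergedDetour (huv : u * v = 0) (hvu : v * u = 0) (w : List Bool) :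
    (mergedDetour u v).future w =
      ![(detour u v).future w 0, (detour u v).future w 1,
        (detour u v).future w 2 + (detour u v).future w 3] := by
  induction w with
  | nil =>
    funext q
    fin_cases q <;> simp [future]
  | cons c w ih =>
    funext q
    rw [future, ih]
    cases c <;> fin_cases q <;>
      simp [Fin.sum_univ_three, mul_add, mul_future_detour_two hvu, mul_future_detour_three huv]

theorem behaviour_mergedDetour (huv : u * v = 0) (hvu : v * u = 0) :
    (mergedDetour u v).behaviour = (detour u v).behaviour := by
  funext w
  rw [behaviour, future_mergedDetour huv hvu]
  simp [Fin.sum_univ_three]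

end Detour

section LowerBound

variable {S : Type} [CommSemiring S] {u v : S} {B : WeightedAutomaton S Bool}

theorem pairwise_not_sharesState_of_behaviour_eq_detour (hu : u * u ≠ 0) (hdet : B.Deterministic)
    (hB : B.behaviour = (detour u v).behaviour) :
    [[], [false], [true]].Pairwise fun x y => ¬ B.SharesState x y := by
  have : Nontrivial S := ⟨u * u, 0, hu⟩
  have nil_false : ¬ B.SharesState [] [false] :=
    hdet.not_sharesState [] [false] (by simp [hB])
  have nil_true : ¬ B.SharesState [] [true] :=
    hdet.not_sharesState [] [true] (by simp [hB, hu])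
  have false_true : ¬ B.SharesState [false] [true] :=
    hdet.not_sharesState [false] [true] (by simp [hB, hu])
  simp [nil_false, nil_true, false_true]

theorem exists_not_sharesState_of_behaviour_eq_detour (hu : u * u ≠ 0) (hv : v * v ≠ 0)
    (hdet : B.Deterministic) (hB : B.behaviour = (detour u v).behaviour) :
    ∃ w, (∃ q, B.past w q ≠ 0) ∧ ∀ x ∈ [[], [false], [true]], ¬ B.SharesState w x := by
  by_cases hshare : B.SharesState [false, true] [true]
  · have past_tt : ∃ q, B.past [true, true] q ≠ 0 :=
      exists_past_ne_zero (z := []) (by simp [hB, hu])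
    have past_ftt : ∃ q, B.past [false, true, true] q ≠ 0 :=
      exists_past_ne_zero (z := [false]) (by simp [hB, hv])
    have hshare' : B.SharesState [false, true, true] [true, true] :=
      hdet.sharesState_append_singleton hshare past_ftt past_tt
    have ftt_nil : ¬ B.SharesState [false, true, true] [] :=
      hdet.not_sharesState [] [false] (by simp [hB, hv.symm])
    have tt_nil : ¬ B.SharesState [true, true] [] := fun h =>
      ftt_nil (hdet.sharesState_trans hshare' h)
    have tt_false : ¬ B.SharesState [true, true] [false] :=
      hdet.not_sharesState [] [false] (by simp [hB, hu])
    have tt_true : ¬ B.SharesState [true, true] [true] := fun h => by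
      have hdvd : B.behaviour [true] ∣ B.behaviour [true, true] :=
        hdet.behaviour_dvd_of_sharesState (x := [true]) (z := [true]) h []
      exact hu (by simpa [hB] using hdvd)
    exact ⟨[true, true], past_tt, by simp [tt_nil, tt_false, tt_true]⟩
  · have past_ft : ∃ q, B.past [false, true] q ≠ 0 :=
      exists_past_ne_zero (z := [true, false]) (by simp [hB, hv])
    have ft_nil : ¬ B.SharesState [false, true] [] :=
      hdet.not_sharesState [] [true, false] (by simp [hB, hv.symm])
    have ft_false : ¬ B.SharesState [false, true] [false] :=
      hdet.not_sharesState [false] [true, false] (by simp [hB, hv.symm])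
    exact ⟨[false, true], past_ft, by simp [ft_nil, ft_false, hshare]⟩

theorem four_le_states_of_behaviour_eq_detour (hu : u * u ≠ 0) (hv : v * v ≠ 0)
    (hdet : B.Deterministic) (hB : B.behaviour = (detour u v).behaviour) : 4 ≤ B.states := by
  have : Nontrivial S := ⟨u * u, 0, hu⟩
  obtain ⟨w, hpast, hw⟩ := exists_not_sharesState_of_behaviour_eq_detour hu hv hdet hB
  have past_nil : ∃ q, B.past [] q ≠ 0 := exists_past_ne_zero (z := []) (by simp [hB])
  have past_false : ∃ q, B.past [false] q ≠ 0 := exists_past_ne_zero (z := [false]) (by simp [hB])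
  have past_true : ∃ q, B.past [true] q ≠ 0 := exists_past_ne_zero (z := [true]) (by simp [hB, hu])
  exact length_le_states (ws := w :: [[], [false], [true]])
    (by simp [hpast, past_nil, past_false, past_true])
    (List.pairwise_cons.mpr ⟨hw, pairwise_not_sharesState_of_behaviour_eq_detour hu hdet hB⟩)

end LowerBound

end WeightedAutomaton

open WeightedAutomaton in
theorem exists_trim_bideterministic_no_minimal_bideterministic_of_sq_ne_zero_general
    {S : Type} [CommSemiring S] (u v : S)
    (huv : u * v = 0) (hu : u * u ≠ 0) (hv : v * v ≠ 0) :
    ∃ A : WeightedAutomaton S Bool, A.Trim ∧ A.Bideterministic ∧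
      ∀ B : WeightedAutomaton S Bool,
        B.behaviour = A.behaviour → B.Minimal → ¬ B.Deterministic := by
  refine ⟨detour u v, trim_detour (left_ne_zero_of_mul hu) (left_ne_zero_of_mul hv),
    bideterministic_detour u v, fun B hB hmin hdet => ?_⟩
  have hvu : v * u = 0 := (mul_comm v u).trans huv
  have four_le : 4 ≤ B.states := four_le_states_of_behaviour_eq_detour hu hv hdet hB
  have le_three : B.states ≤ 3 :=
    hmin (mergedDetour u v) ((behaviour_mergedDetour huv hvu).trans hB.symm)
  omega

/-- Over a commutative semiring with elements `u, v` such that `u*v = 0` and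
`u² ≠ 0 ≠ v²`, there is a trim bideterministic weighted automaton over a
two-letter alphabet none of whose equivalent minimal automata is
bideterministic. -/
theorem exists_trim_bideterministic_no_minimal_bideterministic_of_sq_ne_zero
    {S : Type} [CommSemiring S] (u v : S)
    (huv : u * v = 0) (hu : u * u ≠ 0) (hv : v * v ≠ 0) :
    ∃ A : WeightedAutomaton S Bool, A.Trim ∧ A.Bideterministic ∧
      ∀ B : WeightedAutomaton S Bool,
        B.behaviour = A.behaviour → B.Minimal → ¬ B.Bideterministic := by
  obtain ⟨A, htrim, hbidet, hA⟩ :=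
    exists_trim_bideterministic_no_minimal_bideterministic_of_sq_ne_zero_general u v huv hu hv
  exact ⟨A, htrim, hbidet, fun B hB hmin hB' => hA B hB hmin hB'.deterministic⟩
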